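/- Let p : Ω → Λ be a connected covering of k-graphs, x a vertex of Λ, and v a vertex of Ω with p(v) = x. Then the following are equivalent: (i) the subgroup p_*π(Ω,v) of π(Λ,x) is normal; (ii) the automorphism group Aut(Ω,p) acts transitively on p⁻¹(x); (iii) the induced covering Ω/Aut(Ω,p) → Λ is an isomorphism of k-graphs; (iv) the covering (Ω,p) is isomorphic to the quotient covering Ω → Ω/Aut(Ω,p). -/

import Mathlib

/-!
Arrows-only formalization of `k`-graphs (higher-rank graphs), their coverings,
fundamental groupoids, and groupoid actions, following Pask–Quigg–Raeburn,
"Coverings of k-graphs".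

A small category is encoded by its set of arrows `A` together with
source/range maps `src rng : A → A` (whose common image is the set of
identities = vertices) and a (guarded) total composition `comp : A → A → A`,
where `comp f g` is the composite "f after g", meaningful when `src f = rng g`.
A `k`-graph additionally has a degree map `deg : A → (Fin k → ℕ)` which is
functorial and satisfies the unique factorization property.
-/

namespace KGraphCovering

/-- A `k`-graph in arrows-only form. -/
structure KGraphStruct (k : ℕ) (A : Type) : Type where
  src : A → A
  rng : A → A
  comp : A → A → A
  deg : A → (Fin k → ℕ)
  src_src : ∀ f, src (src f) = src f
  rng_src : ∀ f, rng (src f) = src f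
  src_rng : ∀ f, src (rng f) = rng f
  rng_rng : ∀ f, rng (rng f) = rng f
  comp_src_id : ∀ f, comp f (src f) = f
  rng_comp_id : ∀ f, comp (rng f) f = f
  src_comp : ∀ f g, src f = rng g → src (comp f g) = src g
  rng_comp : ∀ f g, src f = rng g → rng (comp f g) = rng f
  assoc : ∀ f g h, src f = rng g → src g = rng h →
    comp (comp f g) h = comp f (comp g h)
  deg_comp : ∀ f g, src f = rng g → deg (comp f g) = deg f + deg g
  deg_src : ∀ f, deg (src f) = 0
  factor : ∀ f m n, deg f = m + n →
    ∃! q : A × A, src q.1 = rng q.2 ∧ deg q.1 = m ∧ deg q.2 = n ∧ comp q.1 q.2 = f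

namespace KGraphStruct

variable {k : ℕ} {A : Type}

/-- The vertices (objects) are the identity arrows. -/
def IsVertex (S : KGraphStruct k A) (v : A) : Prop := S.src v = v

/-- A `k`-graph is connected if the equivalence relation generated by
"there is a morphism from `v` to `u`" relates all pairs of vertices. -/
def Connected (S : KGraphStruct k A) : Prop :=
  ∀ u v, S.IsVertex u → S.IsVertex v →
    Relation.EqvGen (fun a b => ∃ f, S.rng f = a ∧ S.src f = b) u v

end KGraphStruct

/-- A groupoid in arrows-only form. -/
structure GroupoidStruct (B : Type) : Type where
  src : B → B
  rng : B → B
  comp : B → B → B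
  inv : B → B
  src_src : ∀ f, src (src f) = src f
  rng_src : ∀ f, rng (src f) = src f
  src_rng : ∀ f, src (rng f) = rng f
  rng_rng : ∀ f, rng (rng f) = rng f
  comp_src_id : ∀ f, comp f (src f) = f
  rng_comp_id : ∀ f, comp (rng f) f = f
  src_comp : ∀ f g, src f = rng g → src (comp f g) = src g
  rng_comp : ∀ f g, src f = rng g → rng (comp f g) = rng f
  assoc : ∀ f g h, src f = rng g → src g = rng h →
    comp (comp f g) h = comp f (comp g h)
  src_inv : ∀ f, src (inv f) = rng f
  rng_inv : ∀ f, rng (inv f) = src f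
  inv_comp_self : ∀ f, comp (inv f) f = src f
  comp_inv_self : ∀ f, comp f (inv f) = rng f

namespace GroupoidStruct

variable {B : Type}

/-- The vertices (objects) of a groupoid are the identity arrows. -/
def IsVertex (G : GroupoidStruct B) (v : B) : Prop := G.src v = v

/-- A subgroup of the isotropy group `x𝒢x`, as a set of arrows. -/
def IsSubgroupAt (G : GroupoidStruct B) (x : B) (H : Set B) : Prop :=
  (∀ a ∈ H, G.src a = x ∧ G.rng a = x) ∧ x ∈ H ∧
  (∀ a ∈ H, ∀ b ∈ H, G.comp a b ∈ H) ∧ (∀ a ∈ H, G.inv a ∈ H)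

/-- `K` is a conjugate of `H` in the isotropy group at `x`. -/
def ConjAt (G : GroupoidStruct B) (x : B) (H K : Set B) : Prop :=
  ∃ g, G.src g = x ∧ G.rng g = x ∧
    K = (fun a => G.comp (G.comp g a) (G.inv g)) '' H

/-- `H` is a normal subset of the isotropy group at `x`. -/
def IsNormalAt (G : GroupoidStruct B) (x : B) (H : Set B) : Prop :=
  ∀ g, G.src g = x → G.rng g = x → ∀ a ∈ H, G.comp (G.comp g a) (G.inv g) ∈ H

/-- The normalizer of `H` in the isotropy group at `x`. -/
def normalizerAt (G : GroupoidStruct B) (x : B) (H : Set B) : Set B :=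
  {g | G.src g = x ∧ G.rng g = x ∧
    (fun a => G.comp (G.comp g a) (G.inv g)) '' H = H}

end GroupoidStruct

/-- `f` is a morphism of `k`-graphs (a degree-preserving functor). -/
def IsKGraphHomFun {k : ℕ} {A A' : Type} (S : KGraphStruct k A)
    (T : KGraphStruct k A') (f : A → A') : Prop :=
  (∀ a, f (S.src a) = T.src (f a)) ∧
  (∀ a, f (S.rng a) = T.rng (f a)) ∧
  (∀ a b, S.src a = S.rng b → f (S.comp a b) = T.comp (f a) (f b)) ∧
  (∀ a, T.deg (f a) = S.deg a)

/-- `f` is a functor from a `k`-graph to a groupoid. -/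
def IsFunctorToGpdFun {k : ℕ} {A B : Type} (S : KGraphStruct k A)
    (G : GroupoidStruct B) (f : A → B) : Prop :=
  (∀ a, f (S.src a) = G.src (f a)) ∧
  (∀ a, f (S.rng a) = G.rng (f a)) ∧
  (∀ a b, S.src a = S.rng b → f (S.comp a b) = G.comp (f a) (f b))

/-- `f` is a morphism of groupoids (a functor). -/
def IsGpdHomFun {B C : Type} (G : GroupoidStruct B) (H : GroupoidStruct C)
    (f : B → C) : Prop :=
  (∀ a, f (G.src a) = H.src (f a)) ∧
  (∀ a, f (G.rng a) = H.rng (f a)) ∧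
  (∀ a b, G.src a = G.rng b → f (G.comp a b) = H.comp (f a) (f b))

/-- `p : Ω → Λ` is a covering of `k`-graphs: a surjective `k`-graph morphism
which maps `Ωv` bijectively onto `Λp(v)` and `vΩ` bijectively onto `p(v)Λ`
for every vertex `v` of `Ω`. -/
structure IsCovering {k : ℕ} {A A' : Type} (S : KGraphStruct k A')
    (T : KGraphStruct k A) (p : A' → A) : Prop where
  hom : IsKGraphHomFun S T p
  surj : Function.Surjective p
  src_inj : ∀ a b, S.src a = S.src b → p a = p b → a = b
  src_lift : ∀ v, S.IsVertex v → ∀ g, T.src g = p v → ∃ a, S.src a = v ∧ p a = g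
  rng_inj : ∀ a b, S.rng a = S.rng b → p a = p b → a = b
  rng_lift : ∀ v, S.IsVertex v → ∀ g, T.rng g = p v → ∃ a, S.rng a = v ∧ p a = g

/-- A fundamental groupoid of a `k`-graph `S`: a groupoid `G` whose object
set is identified with the vertex set of `S` via the canonical functor `i`
(which is bijective on objects), with the universal property that every
functor from `S` to a groupoid factors uniquely through `i`. -/
structure FundamentalGroupoid {k : ℕ} {A : Type} (S : KGraphStruct k A) :
    Type 1 where
  B : Type
  G : GroupoidStruct B
  i : A → B
  i_hom : IsFunctorToGpdFun S G i
  obj_bij : ∀ w, G.IsVertex w → ∃! v, S.IsVertex v ∧ i v = w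
  univ : ∀ {C : Type} (H : GroupoidStruct C) (F : A → C),
    IsFunctorToGpdFun S H F →
    ∃! F' : B → C, IsGpdHomFun G H F' ∧ ∀ a, F' (i a) = F a

/-- The fundamental group `π(Λ,x)` at a vertex `x`, as the isotropy of the
fundamental groupoid at `i x`. -/
def FundamentalGroupoid.pi1 {k : ℕ} {A : Type} {S : KGraphStruct k A}
    (F : FundamentalGroupoid S) (x : A) : Set F.B :=
  {a | F.G.src a = F.i x ∧ F.G.rng a = F.i x}

/-- An automorphism of the covering `p : Ω → Λ`. -/
def IsCoveringAut {k : ℕ} {A A' : Type} (Ω : KGraphStruct k A')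
    (Λ : KGraphStruct k A) (p : A' → A) (φ : A' → A') : Prop :=
  Function.Bijective φ ∧ IsKGraphHomFun Ω Ω φ ∧ ∀ a, p (φ a) = p a

/-- The action of the fundamental groupoid `F = 𝒢(Λ)` on the vertex set of a
covering `p : Ω → Λ`, determined by `i(p(λ)) ⬝ s(λ) = r(λ)`.  The fiber of a
vertex `w` of `Ω` is over the object `F.i (p w)`. -/
structure CorrespondingAction {k : ℕ} {A A' : Type} (Ω : KGraphStruct k A')
    (Λ : KGraphStruct k A) (F : FundamentalGroupoid Λ) (p : A' → A)
    (act : F.B → A' → A') : Prop where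
  act_vertex : ∀ a w, Ω.IsVertex w → F.G.src a = F.i (p w) →
    Ω.IsVertex (act a w) ∧ F.i (p (act a w)) = F.G.rng a
  act_id : ∀ w, Ω.IsVertex w → act (F.i (p w)) w = w
  act_comp : ∀ a b w, Ω.IsVertex w → F.G.src b = F.i (p w) →
    F.G.src a = F.G.rng b → act (F.G.comp a b) w = act a (act b w)
  act_cov : ∀ lam, act (F.i (p lam)) (Ω.src lam) = Ω.rng lam

/-- An action of a groupoid `G` on a set `V`, presented by an anchor map
`fib : V → B` (landing in vertices) and a guarded action map. -/
structure GpdActionStruct {B : Type} (G : GroupoidStruct B) (V : Type) :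
    Type where
  fib : V → B
  act : B → V → V
  fib_vertex : ∀ v, G.src (fib v) = fib v
  act_fib : ∀ a v, G.src a = fib v → fib (act a v) = G.rng a
  act_id : ∀ v, act (fib v) v = v
  act_comp : ∀ a b v, G.src b = fib v → G.src a = G.rng b →
    act (G.comp a b) v = act a (act b v)

namespace GpdActionStruct

variable {B V W : Type} {G : GroupoidStruct B}

/-- Transitivity of a groupoid action. -/
def Transitive (ρ : GpdActionStruct G V) : Prop :=
  ∀ u v : V, ∃ a, G.src a = ρ.fib v ∧ ρ.act a v = u

/-- The stability group of the action at `v`. -/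
def stab (ρ : GpdActionStruct G V) (v : V) : Set B :=
  {a | G.src a = ρ.fib v ∧ G.rng a = ρ.fib v ∧ ρ.act a v = v}

/-- Freeness of a groupoid action: all stability groups are trivial. -/
def Free (ρ : GpdActionStruct G V) : Prop :=
  ∀ (v : V) (a : B), a ∈ ρ.stab v → a = ρ.fib v

end GpdActionStruct

/-- A morphism of actions of the groupoid `G`: a fiber-preserving
equivariant map. -/
def IsActionHom {B V W : Type} {G : GroupoidStruct B}
    (ρ : GpdActionStruct G V) (σ : GpdActionStruct G W) (φ : V → W) : Prop :=
  (∀ v, σ.fib (φ v) = ρ.fib v) ∧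
  ∀ a v, G.src a = ρ.fib v → φ (ρ.act a v) = σ.act a (φ v)

/-- An automorphism of an action of the groupoid `G`. -/
def IsActionAut {B V : Type} {G : GroupoidStruct B}
    (ρ : GpdActionStruct G V) (φ : V → V) : Prop :=
  Function.Bijective φ ∧ IsActionHom ρ ρ φ

/-- A universal covering: a connected covering admitting a morphism of
coverings to every connected covering of the base. -/
def IsUniversalCovering {k : ℕ} {A A' : Type} (Ω : KGraphStruct k A')
    (Λ : KGraphStruct k A) (p : A' → A) : Prop :=
  IsCovering Ω Λ p ∧ Ω.Connected ∧
  ∀ (A'' : Type) (Sg : KGraphStruct k A'') (q : A'' → A),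
    IsCovering Sg Λ q → Sg.Connected →
    ∃ φ : A' → A'', IsKGraphHomFun Ω Sg φ ∧ ∀ a, q (φ a) = p a

end KGraphCovering

namespace KGraphCovering

/-!
Unique path lifting makes the vertices of `Ω` a `𝒢(Λ)`-set, the monodromy action. Connectedness
of `Ω` makes it transitive, the stability group at `v` is `p_*π(Ω,v)`, and the automorphisms of the
covering are the automorphisms of this `𝒢(Λ)`-set. In a transitive action an automorphism carrying
`u` to `w` exists exactly when `u` and `w`, in the same fiber, have the same stability group; the
stability groups along the fiber of `v` are the conjugates of the one at `v`. This is (i) ⇔ (ii).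

A covering automorphism moving one vertex correctly moves every path out of or into it correctly, so
transitivity spreads from `p⁻¹(x)` along the connected graph `Ω` to `p⁻¹(l)` for every morphism `l`.
Thus (ii) says that `p` identifies no more than the quotient map does, as do (iii) and (iv).
-/

namespace GroupoidStruct

variable {B : Type} {G : GroupoidStruct B}

theorem eq_inv_of_comp_eq_src {f g : B} (hgf : G.src g = G.rng f) (h : G.comp g f = G.src f) :
    g = G.inv f :=
  calc g = G.comp g (G.comp f (G.inv f)) := by rw [G.comp_inv_self, ← hgf, G.comp_src_id]
    _ = G.comp (G.comp g f) (G.inv f) := (G.assoc _ _ _ hgf (G.rng_inv f).symm).symm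
    _ = G.inv f := by rw [h, ← G.rng_inv, G.rng_comp_id]

theorem inv_inv (f : B) : G.inv (G.inv f) = f :=
  (G.eq_inv_of_comp_eq_src (G.rng_inv f).symm (by rw [G.comp_inv_self, G.src_inv])).symm

theorem comp_inv_comp {f g : B} (h : G.rng f = G.rng g) : G.comp f (G.comp (G.inv f) g) = g := by
  rw [← G.assoc _ _ _ (G.rng_inv f).symm (by rw [G.src_inv, h]), G.comp_inv_self, h, G.rng_comp_id]

theorem comp_comp_inv {f g : B} (h : G.src f = G.rng g) : G.comp (G.comp f g) (G.inv g) = f := by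
  rw [G.assoc _ _ _ h (G.rng_inv g).symm, G.comp_inv_self, ← h, G.comp_src_id]

/-- The conjugate `h g h⁻¹` of a loop `g` at the source of `h`. -/
def conj (G : GroupoidStruct B) (h g : B) : B := G.comp (G.comp h g) (G.inv h)

theorem conj_conj_inv {h g : B} (hsrc : G.src g = G.rng h) (hrng : G.rng g = G.rng h) :
    G.conj h (G.conj (G.inv h) g) = g := by
  have hinv : G.src (G.inv h) = G.rng g := by rw [G.src_inv, hrng]
  have hhg : G.src (G.comp (G.inv h) g) = G.rng h := by rw [G.src_comp _ _ hinv, hsrc]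
  have hrng' : G.rng (G.comp (G.inv h) g) = G.src h := by rw [G.rng_comp _ _ hinv, G.rng_inv]
  rw [conj, conj, inv_inv, ← G.assoc _ _ _ hrng'.symm hhg, comp_inv_comp hrng.symm,
    comp_comp_inv hsrc]

end GroupoidStruct

theorem IsGpdHomFun.map_inv {B C : Type} {G : GroupoidStruct B} {H : GroupoidStruct C} {f : B → C}
    (hf : IsGpdHomFun G H f) (a : B) : f (G.inv a) = H.inv (f a) :=
  H.eq_inv_of_comp_eq_src (by rw [← hf.1, ← hf.2.1, G.src_inv])
    (by rw [← hf.2.2 _ _ (G.src_inv a), G.inv_comp_self, hf.1])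

namespace GpdActionStruct

variable {B V W : Type} {G : GroupoidStruct B} {ρ : GpdActionStruct G V} {σ : GpdActionStruct G W}

theorem act_inv_act {a : B} {v : V} (h : G.src a = ρ.fib v) :
    ρ.act (G.inv a) (ρ.act a v) = v := by
  rw [← ρ.act_comp _ _ _ h (G.src_inv a), G.inv_comp_self, h, ρ.act_id]

theorem act_act_inv {a : B} {v : V} (h : G.rng a = ρ.fib v) :
    ρ.act a (ρ.act (G.inv a) v) = v := by
  rw [← ρ.act_comp _ _ _ (by rw [G.src_inv, h]) (G.rng_inv a).symm, G.comp_inv_self, h, ρ.act_id]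

theorem fib_act_inv {a : B} {v : V} (h : G.rng a = ρ.fib v) :
    ρ.fib (ρ.act (G.inv a) v) = G.src a := by
  rw [ρ.act_fib _ _ (by rw [G.src_inv, h]), G.rng_inv]

theorem conj_mem_stab {h g : B} {v : V} (hh : G.src h = ρ.fib v) (hg : g ∈ ρ.stab v) :
    G.conj h g ∈ ρ.stab (ρ.act h v) := by
  obtain ⟨hsrc, hrng, hact⟩ := hg
  have hfib := ρ.act_fib h v hh
  have hhg : G.src h = G.rng g := hh.trans hrng.symm
  have hconj : G.src (G.comp h g) = G.rng (G.inv h) := by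
    rw [G.src_comp _ _ hhg, G.rng_inv, hsrc, hh]
  have hinv : G.src (G.inv h) = ρ.fib (ρ.act h v) := by rw [G.src_inv, hfib]
  refine ⟨?_, ?_, ?_⟩
  · rw [GroupoidStruct.conj, G.src_comp _ _ hconj, hinv]
  · rw [GroupoidStruct.conj, G.rng_comp _ _ hconj, G.rng_comp _ _ hhg, hfib]
  · rw [GroupoidStruct.conj, ρ.act_comp _ _ _ hinv hconj, act_inv_act hh,
      ρ.act_comp _ _ _ hsrc hhg, hact]

theorem act_eq_act_of_stab_subset {a b : B} {u : V} {w : W} (hfib : σ.fib w = ρ.fib u)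
    (hstab : ρ.stab u ⊆ σ.stab w) (ha : G.src a = ρ.fib u) (hb : G.src b = ρ.fib u)
    (hab : ρ.act a u = ρ.act b u) : σ.act a w = σ.act b w := by
  have hrng : G.rng a = G.rng b := by rw [← ρ.act_fib _ _ ha, hab, ρ.act_fib _ _ hb]
  have hinv : G.src (G.inv b) = G.rng a := by rw [G.src_inv, hrng]
  have hmem : G.comp (G.inv b) a ∈ ρ.stab u := by
    refine ⟨by rw [G.src_comp _ _ hinv, ha], by rw [G.rng_comp _ _ hinv, G.rng_inv, hb], ?_⟩
    rw [ρ.act_comp _ _ _ ha hinv, hab, act_inv_act hb]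
  have hact := (hstab hmem).2.2
  rw [σ.act_comp _ _ _ (ha.trans hfib.symm) hinv] at hact
  calc σ.act a w = σ.act b (σ.act (G.inv b) (σ.act a w)) :=
        (act_act_inv (by rw [σ.act_fib _ _ (ha.trans hfib.symm), hrng])).symm
    _ = σ.act b w := by rw [hact]

theorem equivalence_orbit (ρ : GpdActionStruct G V) :
    Equivalence fun u w => ∃ a, G.src a = ρ.fib u ∧ ρ.act a u = w where
  refl u := ⟨ρ.fib u, ρ.fib_vertex u, ρ.act_id u⟩
  symm := by
    rintro u _ ⟨a, ha, rfl⟩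
    exact ⟨G.inv a, by rw [G.src_inv, ρ.act_fib _ _ ha], act_inv_act ha⟩
  trans := by
    rintro u _ _ ⟨a, ha, rfl⟩ ⟨b, hb, rfl⟩
    have hba : G.src b = G.rng a := by rw [hb, ρ.act_fib _ _ ha]
    exact ⟨G.comp b a, by rw [G.src_comp _ _ hba, ha], ρ.act_comp _ _ _ ha hba⟩

end GpdActionStruct

section ActionHom

open GpdActionStruct

variable {B V W X : Type} {G : GroupoidStruct B}
  {ρ : GpdActionStruct G V} {σ : GpdActionStruct G W} {τ : GpdActionStruct G X}

theorem isActionHom_id : IsActionHom ρ ρ id := ⟨fun _ => rfl, fun _ _ _ => rfl⟩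

theorem IsActionHom.comp {ψ : W → X} {φ : V → W} (hψ : IsActionHom σ τ ψ)
    (hφ : IsActionHom ρ σ φ) : IsActionHom ρ τ (ψ ∘ φ) := by
  refine ⟨fun v => (hψ.1 _).trans (hφ.1 v), fun a v h => ?_⟩
  rw [Function.comp_apply, hφ.2 a v h, hψ.2 a _ (h.trans (hφ.1 v).symm), Function.comp_apply]

theorem IsActionHom.stab_subset {φ : V → W} (hφ : IsActionHom ρ σ φ) (v : V) :
    ρ.stab v ⊆ σ.stab (φ v) := fun a ⟨hsrc, hrng, hact⟩ =>
  ⟨hsrc.trans (hφ.1 v).symm, hrng.trans (hφ.1 v).symm, by rw [← hφ.2 a v hsrc, hact]⟩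

theorem IsActionHom.eq_of_transitive {φ ψ : V → W} (hφ : IsActionHom ρ σ φ)
    (hψ : IsActionHom ρ σ ψ) (hρ : ρ.Transitive) {u : V} (h : φ u = ψ u) : φ = ψ := by
  funext z
  obtain ⟨a, ha, rfl⟩ := hρ z u
  rw [hφ.2 a u ha, hψ.2 a u ha, h]

theorem exists_isActionHom (hρ : ρ.Transitive) {u : V} {w : W} (hfib : σ.fib w = ρ.fib u)
    (hstab : ρ.stab u ⊆ σ.stab w) : ∃ φ, IsActionHom ρ σ φ ∧ φ u = w := by
  choose t ht hact using fun z => hρ z u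
  have act_t_act (a : B) (ha : G.src a = ρ.fib u) : σ.act (t (ρ.act a u)) w = σ.act a w :=
    act_eq_act_of_stab_subset hfib hstab (ht _) ha (hact _)
  refine ⟨fun z => σ.act (t z) w, ⟨fun z => ?_, fun a z ha => ?_⟩, ?_⟩
  · rw [σ.act_fib _ _ ((ht z).trans hfib.symm), ← ρ.act_fib _ _ (ht z), hact]
  · have hat : G.src a = G.rng (t z) := by rw [ha, ← ρ.act_fib _ _ (ht z), hact]
    calc σ.act (t (ρ.act a z)) w = σ.act (t (ρ.act (G.comp a (t z)) u)) w := by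
          rw [ρ.act_comp _ _ _ (ht z) hat, hact]
      _ = σ.act (G.comp a (t z)) w := act_t_act _ (by rw [G.src_comp _ _ hat, ht])
      _ = σ.act a (σ.act (t z) w) := σ.act_comp _ _ _ ((ht z).trans hfib.symm) hat
  · calc σ.act (t u) w = σ.act (t (ρ.act (ρ.fib u) u)) w := by rw [ρ.act_id]
      _ = σ.act (σ.fib w) w := by rw [act_t_act _ (ρ.fib_vertex u), hfib]
      _ = w := σ.act_id w

theorem exists_isActionAut (hρ : ρ.Transitive) {u w : V} (hfib : ρ.fib u = ρ.fib w)
    (hstab : ρ.stab u = ρ.stab w) : ∃ φ, IsActionAut ρ φ ∧ φ u = w := by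
  obtain ⟨φ, hφ, hφu⟩ := exists_isActionHom hρ hfib.symm hstab.subset
  obtain ⟨ψ, hψ, hψw⟩ := exists_isActionHom hρ hfib hstab.symm.subset
  have hψφ : ψ ∘ φ = id :=
    (hψ.comp hφ).eq_of_transitive isActionHom_id hρ (u := u) (by simp [hφu, hψw])
  have hφψ : φ ∘ ψ = id :=
    (hφ.comp hψ).eq_of_transitive isActionHom_id hρ (u := w) (by simp [hφu, hψw])
  exact ⟨φ, ⟨Function.bijective_iff_has_inverse.2 ⟨ψ, congrFun hψφ, congrFun hφψ⟩, hφ⟩, hφu⟩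

theorem GpdActionStruct.stab_eq_of_isNormalAt (hρ : ρ.Transitive) {v w : V}
    (hN : G.IsNormalAt (ρ.fib v) (ρ.stab v)) (hfib : ρ.fib w = ρ.fib v) :
    ρ.stab v = ρ.stab w := by
  obtain ⟨h, hsrc, rfl⟩ := hρ w v
  have hrng : G.rng h = ρ.fib v := by rw [← ρ.act_fib _ _ hsrc, hfib]
  have hinv : G.src (G.inv h) = ρ.fib (ρ.act h v) := by rw [G.src_inv, hrng, hfib]
  ext g
  constructor
  · intro hg
    have hmem : G.conj (G.inv h) g ∈ ρ.stab v :=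
      hN (G.inv h) (by rw [G.src_inv, hrng]) (by rw [G.rng_inv, hsrc]) g hg
    rw [← GroupoidStruct.conj_conj_inv (hg.1.trans hrng.symm) (hg.2.1.trans hrng.symm)]
    exact conj_mem_stab hsrc hmem
  · intro hg
    have hmem : G.conj (G.inv h) g ∈ ρ.stab v := by
      simpa only [act_inv_act hsrc] using conj_mem_stab hinv hg
    have hrng' : G.rng h = ρ.fib (ρ.act h v) := hrng.trans hfib.symm
    rw [← GroupoidStruct.conj_conj_inv (hg.1.trans hrng'.symm) (hg.2.1.trans hrng'.symm)]
    exact hN h hsrc hrng _ hmem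

theorem GpdActionStruct.isNormalAt_stab_iff (hρ : ρ.Transitive) (v : V) :
    G.IsNormalAt (ρ.fib v) (ρ.stab v) ↔
      ∀ u w, ρ.fib u = ρ.fib v → ρ.fib w = ρ.fib v → ∃ φ, IsActionAut ρ φ ∧ φ u = w := by
  constructor
  · intro hN u w hu hw
    exact exists_isActionAut hρ (hu.trans hw.symm)
      ((stab_eq_of_isNormalAt hρ hN hu).symm.trans (stab_eq_of_isNormalAt hρ hN hw))
  · intro hT h hsrc hrng g hg
    obtain ⟨φ, hφ, hφv⟩ := hT v (ρ.act (G.inv h) v) rfl ((fib_act_inv hrng).trans hsrc)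
    have hmem : g ∈ ρ.stab (ρ.act (G.inv h) v) := hφv ▸ hφ.2.stab_subset v hg
    have hconj := conj_mem_stab (fib_act_inv hrng).symm hmem
    rwa [act_act_inv hrng] at hconj

end ActionHom

/-! ### Actions as functors to partial bijections -/

section PartialBijections

variable {V : Type*}

theorem pequiv_trans_symm_trans (f : V ≃. V) : (f.trans f.symm).trans f = f := by
  ext u w
  simp only [PEquiv.self_trans_symm, ← Option.mem_def, PEquiv.mem_trans, PEquiv.mem_ofSet_iff]
  exact ⟨fun ⟨_, ⟨huz, _⟩, hz⟩ => huz ▸ hz, fun h => ⟨u, ⟨rfl, Option.isSome_of_mem h⟩, h⟩⟩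

theorem pequiv_symm_trans_trans (f : V ≃. V) : (f.symm.trans f).trans f.symm = f.symm :=
  pequiv_trans_symm_trans f.symm

/-- The groupoid of partial bijections of a set, whose vertices are the identities of its subsets:
the target of the functors that encode actions on `V`. The composite `comp f g` is `f` after `g`. -/
def partialBijections (V : Type) : GroupoidStruct (V ≃. V) where
  src f := f.trans f.symm
  rng f := f.symm.trans f
  comp f g := g.trans f
  inv f := f.symm
  src_src f := by
    rw [PEquiv.symm_trans_rev, PEquiv.symm_symm, ← PEquiv.trans_assoc, pequiv_trans_symm_trans]
  rng_src f := by
    rw [PEquiv.symm_trans_rev, PEquiv.symm_symm, ← PEquiv.trans_assoc, pequiv_trans_symm_trans]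
  src_rng f := by
    rw [PEquiv.symm_trans_rev, PEquiv.symm_symm, ← PEquiv.trans_assoc, pequiv_symm_trans_trans]
  rng_rng f := by
    rw [PEquiv.symm_trans_rev, PEquiv.symm_symm, ← PEquiv.trans_assoc, pequiv_symm_trans_trans]
  comp_src_id := pequiv_trans_symm_trans
  rng_comp_id f := by rw [← PEquiv.trans_assoc, pequiv_trans_symm_trans]
  src_comp f g h := by
    rw [PEquiv.symm_trans_rev, PEquiv.trans_assoc, ← PEquiv.trans_assoc f, h, ← PEquiv.trans_assoc,
      ← PEquiv.trans_assoc, pequiv_trans_symm_trans]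
  rng_comp f g h := by
    rw [PEquiv.symm_trans_rev, PEquiv.trans_assoc, ← PEquiv.trans_assoc g.symm, ← h,
      pequiv_trans_symm_trans]
  assoc f g h _ _ := (PEquiv.trans_assoc h g f).symm
  src_inv f := by rw [PEquiv.symm_symm]
  rng_inv f := by rw [PEquiv.symm_symm]
  inv_comp_self _ := rfl
  comp_inv_self _ := rfl

theorem mem_partialBijections_src {V : Type} {f : V ≃. V} {u w : V} :
    w ∈ (partialBijections V).src f u ↔ u = w ∧ (f u).isSome := by
  simp only [partialBijections, PEquiv.self_trans_symm, PEquiv.mem_ofSet_iff]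
  exact ⟨fun ⟨h, hf⟩ => ⟨h.symm, h ▸ hf⟩, fun ⟨h, hf⟩ => ⟨h.symm, h ▸ hf⟩⟩

theorem mem_partialBijections_rng {V : Type} {f : V ≃. V} {u w : V} :
    w ∈ (partialBijections V).rng f u ↔ u = w ∧ (f.symm u).isSome :=
  mem_partialBijections_src (f := f.symm)

theorem mem_partialBijections_comp {V : Type} {f g : V ≃. V} {u w : V} :
    w ∈ (partialBijections V).comp f g u ↔ ∃ z, z ∈ g u ∧ w ∈ f z :=
  PEquiv.mem_trans g f u w

open Classical in
/-- The partial function with graph `R`, for a right-unique relation `R`. -/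
noncomputable def partialFunOfRel (R : V → V → Prop) (u : V) : Option V :=
  if h : ∃ w, R u w then some h.choose else none

theorem mem_partialFunOfRel {R : V → V → Prop} (hR : Relator.RightUnique R) {u w : V} :
    w ∈ partialFunOfRel R u ↔ R u w := by
  rw [partialFunOfRel]
  split_ifs with h
  · rw [Option.mem_some_iff]
    exact ⟨fun hw => hw ▸ h.choose_spec, hR h.choose_spec⟩
  · exact iff_of_false (Option.not_mem_none w) fun hw => h ⟨w, hw⟩

/-- The partial bijection with graph `R`, used to turn unique path lifting into a partial map. -/
noncomputable def pequivOfBiUnique (R : V → V → Prop) (hR : Relator.BiUnique R) : V ≃. V where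
  toFun := partialFunOfRel R
  invFun := partialFunOfRel (flip R)
  inv _ _ := (mem_partialFunOfRel hR.1.flip).trans (mem_partialFunOfRel hR.2).symm

theorem mem_pequivOfBiUnique {R : V → V → Prop} (hR : Relator.BiUnique R) {u w : V} :
    w ∈ pequivOfBiUnique R hR u ↔ R u w :=
  mem_partialFunOfRel hR.2

end PartialBijections

section OfFunctor

variable {B V : Type} {G : GroupoidStruct B} {T : B → V ≃. V} {fib : V → B}

/-- `T` encodes an action of `G` on `V` with anchor map `fib`: it is a functor to partial bijections
that sends each vertex `b` of `G` to the identity of the fiber over `b`. -/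
structure IsActionFunctor (G : GroupoidStruct B) (T : B → V ≃. V) (fib : V → B) : Prop where
  hom : IsGpdHomFun G (partialBijections V) T
  fib_vertex : ∀ v, G.IsVertex (fib v)
  mem_iff : ∀ b, G.IsVertex b → ∀ {u w}, w ∈ T b u ↔ u = w ∧ fib u = b

theorem IsActionFunctor.getD_mem (hT : IsActionFunctor G T fib) {b : B} {u : V}
    (h : G.src b = fib u) : (T b u).getD u ∈ T b u := by
  have hu : u ∈ T (G.src b) u := (hT.mem_iff _ (G.src_src b)).2 ⟨rfl, h.symm⟩
  rw [hT.hom.1] at hu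
  obtain ⟨w, hw⟩ := Option.isSome_iff_exists.1 (mem_partialBijections_src.1 hu).2
  rw [hw, Option.getD_some, Option.mem_some_iff]

theorem IsActionFunctor.fib_eq_rng (hT : IsActionFunctor G T fib) {b : B} {u w : V}
    (h : w ∈ T b u) : fib w = G.rng b := by
  have hw : w ∈ T (G.rng b) w := by
    rw [hT.hom.2.1, mem_partialBijections_rng]
    exact ⟨rfl, Option.isSome_of_mem ((T b).mem_iff_mem.2 h)⟩
  exact ((hT.mem_iff _ (G.src_rng b)).1 hw).2

/-- The action encoded by `T`. Outside its domain `T b` is completed by the identity. -/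
def GpdActionStruct.ofFunctor (hT : IsActionFunctor G T fib) : GpdActionStruct G V where
  fib := fib
  act b u := (T b u).getD u
  fib_vertex := hT.fib_vertex
  act_fib _ _ h := hT.fib_eq_rng (hT.getD_mem h)
  act_id v := by
    rw [Option.mem_def.1 ((hT.mem_iff _ (hT.fib_vertex v)).2 ⟨rfl, rfl⟩), Option.getD_some]
  act_comp a b u hb hab := by
    have hw := hT.getD_mem hb
    have hz := hT.getD_mem (hab.trans (hT.fib_eq_rng hw).symm)
    have hcomp : (T a ((T b u).getD u)).getD ((T b u).getD u) ∈ T (G.comp a b) u := by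
      rw [hT.hom.2.2 _ _ hab, mem_partialBijections_comp]
      exact ⟨_, hw, hz⟩
    rw [Option.mem_def.1 hcomp, Option.getD_some]

theorem GpdActionStruct.ofFunctor_act_of_mem (hT : IsActionFunctor G T fib) {b : B} {u w : V}
    (h : w ∈ T b u) : (ofFunctor hT).act b u = w := by
  simp only [ofFunctor, Option.mem_def.1 h, Option.getD_some]

end OfFunctor

/-! ### Generation of the fundamental groupoid -/

open Classical in
/-- The subgroupoid of the arrows that satisfy `P`. Composites that are not defined take a junk
value, so that closure under `comp` is only needed for composable arrows. -/
noncomputable def GroupoidStruct.subgroupoid {B : Type} (G : GroupoidStruct B) (P : B → Prop)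
    (comp_mem : ∀ f g, G.src f = G.rng g → P f → P g → P (G.comp f g))
    (inv_mem : ∀ f, P f → P (G.inv f)) : GroupoidStruct {b // P b} where
  src f := ⟨G.src f, G.inv_comp_self f ▸ comp_mem _ _ (G.src_inv _) (inv_mem _ f.2) f.2⟩
  rng f := ⟨G.rng f, G.comp_inv_self f ▸ comp_mem _ _ (G.rng_inv _).symm f.2 (inv_mem _ f.2)⟩
  comp f g := if h : G.src f = G.rng g then ⟨G.comp f g, comp_mem _ _ h f.2 g.2⟩ else f
  inv f := ⟨G.inv f, inv_mem _ f.2⟩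
  src_src f := Subtype.ext (G.src_src f)
  rng_src f := Subtype.ext (G.rng_src f)
  src_rng f := Subtype.ext (G.src_rng f)
  rng_rng f := Subtype.ext (G.rng_rng f)
  comp_src_id f := by simp only [G.rng_src, G.comp_src_id, dite_true]
  rng_comp_id f := by simp only [G.src_rng, G.rng_comp_id, dite_true]
  src_comp f g h := by
    rw [Subtype.mk.injEq] at h
    simp only [dif_pos h, G.src_comp _ _ h]
  rng_comp f g h := by
    rw [Subtype.mk.injEq] at h
    simp only [dif_pos h, G.rng_comp _ _ h]
  assoc f g h hfg hgh := by
    rw [Subtype.mk.injEq] at hfg hgh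
    simp only [dif_pos hfg, dif_pos hgh, G.src_comp _ _ hfg, G.rng_comp _ _ hgh,
      G.assoc _ _ _ hfg hgh]
  src_inv f := Subtype.ext (G.src_inv f)
  rng_inv f := Subtype.ext (G.rng_inv f)
  inv_comp_self f := by simp only [G.src_inv, G.inv_comp_self, dite_true]
  comp_inv_self f := by simp only [G.rng_inv, G.comp_inv_self, dite_true]

theorem GroupoidStruct.coe_subgroupoid_comp {B : Type} {G : GroupoidStruct B} {P : B → Prop}
    {comp_mem : ∀ f g, G.src f = G.rng g → P f → P g → P (G.comp f g)}
    {inv_mem : ∀ f, P f → P (G.inv f)} {f g : {b // P b}} (h : G.src f = G.rng g) :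
    ((G.subgroupoid P comp_mem inv_mem).comp f g : B) = G.comp f g := by
  simp only [subgroupoid, dif_pos h]

theorem GroupoidStruct.isGpdHomFun_coe_subgroupoid {B : Type} {G : GroupoidStruct B} {P : B → Prop}
    {comp_mem : ∀ f g, G.src f = G.rng g → P f → P g → P (G.comp f g)}
    {inv_mem : ∀ f, P f → P (G.inv f)} :
    IsGpdHomFun (G.subgroupoid P comp_mem inv_mem) G Subtype.val :=
  ⟨fun _ => rfl, fun _ => rfl, fun _ _ h => coe_subgroupoid_comp (congrArg Subtype.val h)⟩

theorem IsGpdHomFun.comp {B C D : Type} {G : GroupoidStruct B} {H : GroupoidStruct C}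
    {K : GroupoidStruct D} {g : C → D} {f : B → C} (hg : IsGpdHomFun H K g)
    (hf : IsGpdHomFun G H f) : IsGpdHomFun G K (g ∘ f) := by
  refine ⟨fun a => ?_, fun a => ?_, fun a b h => ?_⟩ <;> simp only [Function.comp_apply]
  · rw [hf.1, hg.1]
  · rw [hf.2.1, hg.2.1]
  · rw [hf.2.2 _ _ h, hg.2.2 _ _ (by rw [← hf.1, ← hf.2.1, h])]

namespace KGraphStruct

variable {k : ℕ} {A : Type}

/-- The set `S⁰` of vertices, as a type. -/
abbrev Vertex (S : KGraphStruct k A) : Type := {v // S.IsVertex v}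

/-- The source of a morphism, as a vertex. -/
def source (S : KGraphStruct k A) (a : A) : S.Vertex := ⟨S.src a, S.src_src a⟩

/-- The range of a morphism, as a vertex. -/
def range (S : KGraphStruct k A) (a : A) : S.Vertex := ⟨S.rng a, S.src_rng a⟩

variable {S : KGraphStruct k A}

theorem source_coe (v : S.Vertex) : S.source v = v := Subtype.ext v.2

theorem rng_coe (v : S.Vertex) : S.rng v = v := by
  rw [← v.2, S.rng_src]

theorem range_coe (v : S.Vertex) : S.range v = v := Subtype.ext (rng_coe v)

end KGraphStruct

namespace FundamentalGroupoid

variable {k : ℕ} {A : Type} {S : KGraphStruct k A} (F : FundamentalGroupoid S)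

theorem src_i_eq_rng_i {a b : A} (h : S.src a = S.rng b) :
    F.G.src (F.i a) = F.G.rng (F.i b) := by
  rw [← F.i_hom.1, ← F.i_hom.2.1, h]

@[elab_as_elim]
theorem induction {P : F.B → Prop} (b : F.B) (of : ∀ a, P (F.i a))
    (comp : ∀ f g, F.G.src f = F.G.rng g → P f → P g → P (F.G.comp f g))
    (inv : ∀ f, P f → P (F.G.inv f)) : P b := by
  have hF : IsFunctorToGpdFun S (F.G.subgroupoid P comp inv) fun a => ⟨F.i a, of a⟩ := by
    refine ⟨fun a => Subtype.ext (F.i_hom.1 a), fun a => Subtype.ext (F.i_hom.2.1 a),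
      fun a b h => Subtype.ext ?_⟩
    rw [GroupoidStruct.coe_subgroupoid_comp (F.src_i_eq_rng_i h)]
    exact F.i_hom.2.2 a b h
  obtain ⟨L, ⟨hL, hLi⟩, -⟩ := F.univ _ _ hF
  have hid : Subtype.val ∘ L = id := (F.univ F.G F.i F.i_hom).unique
    ⟨GroupoidStruct.isGpdHomFun_coe_subgroupoid.comp hL, fun a => congrArg Subtype.val (hLi a)⟩
    ⟨⟨fun _ => rfl, fun _ => rfl, fun _ _ _ => rfl⟩, fun _ => rfl⟩
  have hb : (L b : F.B) = b := congrFun hid b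
  exact hb ▸ (L b).2

theorem isVertex_i {v : A} (hv : S.IsVertex v) : F.G.IsVertex (F.i v) :=
  (F.i_hom.1 v).symm.trans (congrArg F.i hv)

theorem i_inj {v w : A} (hv : S.IsVertex v) (hw : S.IsVertex w) : F.i v = F.i w ↔ v = w :=
  ⟨fun h => (F.obj_bij _ (F.isVertex_i hw)).unique ⟨hv, h⟩ ⟨hw, rfl⟩, congrArg F.i⟩

theorem exists_i_eq {b : F.B} (hb : F.G.IsVertex b) : ∃ v : S.Vertex, F.i v = b := by
  obtain ⟨v, ⟨hv, hvb⟩, -⟩ := F.obj_bij b hb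
  exact ⟨⟨v, hv⟩, hvb⟩

theorem isActionHom_of_act_i {V W : Type} {ρ : GpdActionStruct F.G V} {σ : GpdActionStruct F.G W}
    {φ : V → W} (hfib : ∀ v, σ.fib (φ v) = ρ.fib v)
    (hact : ∀ a v, F.G.src (F.i a) = ρ.fib v → φ (ρ.act (F.i a) v) = σ.act (F.i a) (φ v)) :
    IsActionHom ρ σ φ := by
  refine ⟨hfib, fun b => ?_⟩
  induction b using F.induction with
  | of a => exact hact a
  | comp f g hfg hf hg =>
    intro v h
    rw [F.G.src_comp _ _ hfg] at h
    rw [ρ.act_comp _ _ _ h hfg, hf _ (by rw [hfg, ρ.act_fib _ _ h]), hg _ h,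
      σ.act_comp _ _ _ (h.trans (hfib v).symm) hfg]
  | inv f hf =>
    intro v h
    rw [F.G.src_inv] at h
    have hsrc : F.G.src f = ρ.fib (ρ.act (F.G.inv f) v) :=
      (GpdActionStruct.fib_act_inv h).symm
    calc φ (ρ.act (F.G.inv f) v)
        = σ.act (F.G.inv f) (σ.act f (φ (ρ.act (F.G.inv f) v))) :=
          (GpdActionStruct.act_inv_act (hsrc.trans (hfib _).symm)).symm
      _ = σ.act (F.G.inv f) (φ v) := by rw [← hf _ hsrc, GpdActionStruct.act_act_inv h]

end FundamentalGroupoid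

/-! ### The monodromy action of a covering -/

theorem KGraphStruct.Connected.rel_of_equivalence {k : ℕ} {A : Type} {S : KGraphStruct k A}
    (hS : S.Connected) {r : A → A → Prop} (hr : Equivalence r) (h : ∀ a, r (S.rng a) (S.src a))
    {u v : A} (hu : S.IsVertex u) (hv : S.IsVertex v) : r u v := by
  refine hr.eqvGen_iff.1 ((hS u v hu hv).mono ?_)
  rintro _ _ ⟨a, rfl, rfl⟩
  exact h a

section KGraphHom

variable {k : ℕ} {A A' : Type} {S : KGraphStruct k A} {T : KGraphStruct k A'} {f : A → A'}

theorem IsKGraphHomFun.map_isVertex (hf : IsKGraphHomFun S T f) {v : A} (hv : S.IsVertex v) :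
    T.IsVertex (f v) :=
  (hf.1 v).symm.trans (congrArg f hv)

/-- The map that a morphism of `k`-graphs induces on vertices. -/
def IsKGraphHomFun.onVertices (hf : IsKGraphHomFun S T f) (v : S.Vertex) : T.Vertex :=
  ⟨f v, hf.map_isVertex v.2⟩

end KGraphHom

namespace IsCovering

variable {k : ℕ} {A A' A'' : Type} {Λ : KGraphStruct k A} {Ω : KGraphStruct k A'}
  {Ω' : KGraphStruct k A''} {p : A' → A} {q : A'' → A}

theorem isVertex_map_iff (hp : IsCovering Ω Λ p) {a : A'} :
    Λ.IsVertex (p a) ↔ Ω.IsVertex a :=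
  ⟨fun h => hp.src_inj _ _ (Ω.src_src a) ((hp.hom.1 a).trans h), hp.hom.map_isVertex⟩

theorem biUnique_lift (hp : IsCovering Ω Λ p) (l : A) :
    Relator.BiUnique fun u w : Ω.Vertex => ∃ a, p a = l ∧ Ω.source a = u ∧ Ω.range a = w := by
  constructor
  · rintro _ _ _ ⟨a, ha, rfl, rfl⟩ ⟨b, hb, rfl, hba⟩
    rw [hp.rng_inj a b (congrArg Subtype.val hba).symm (ha.trans hb.symm)]
  · rintro _ _ _ ⟨a, ha, rfl, rfl⟩ ⟨b, hb, hba, rfl⟩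
    rw [hp.src_inj a b (congrArg Subtype.val hba).symm (ha.trans hb.symm)]

/-- The partial bijection of `Ω⁰` that carries the source of each lift of `l` to its range: the
monodromy of a morphism of `Λ`. -/
noncomputable def lift (hp : IsCovering Ω Λ p) (l : A) : Ω.Vertex ≃. Ω.Vertex :=
  pequivOfBiUnique _ (hp.biUnique_lift l)

theorem mem_lift (hp : IsCovering Ω Λ p) {l : A} {u w : Ω.Vertex} :
    w ∈ hp.lift l u ↔ ∃ a, p a = l ∧ Ω.source a = u ∧ Ω.range a = w :=
  mem_pequivOfBiUnique _

theorem mem_lift_of_isVertex (hp : IsCovering Ω Λ p) {x : A} (hx : Λ.IsVertex x)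
    {u w : Ω.Vertex} : w ∈ hp.lift x u ↔ u = w ∧ p u = x := by
  rw [mem_lift]
  constructor
  · rintro ⟨a, rfl, rfl, rfl⟩
    lift a to Ω.Vertex using hp.isVertex_map_iff.1 hx
    rw [Ω.source_coe, Ω.range_coe]
    exact ⟨rfl, rfl⟩
  · rintro ⟨rfl, hu⟩
    exact ⟨u, hu, Ω.source_coe u, Ω.range_coe u⟩

theorem isSome_lift_iff (hp : IsCovering Ω Λ p) {l : A} {u : Ω.Vertex} :
    (hp.lift l u).isSome ↔ p u = Λ.src l := by
  simp only [Option.isSome_iff_exists, ← Option.mem_def, hp.mem_lift]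
  constructor
  · rintro ⟨_, a, rfl, rfl, _⟩
    exact hp.hom.1 a
  · intro h
    obtain ⟨a, ha, rfl⟩ := hp.src_lift u u.2 l h.symm
    exact ⟨_, a, rfl, Subtype.ext ha, rfl⟩

theorem isSome_lift_symm_iff (hp : IsCovering Ω Λ p) {l : A} {w : Ω.Vertex} :
    ((hp.lift l).symm w).isSome ↔ p w = Λ.rng l := by
  simp only [Option.isSome_iff_exists, ← Option.mem_def, PEquiv.mem_iff_mem, hp.mem_lift]
  constructor
  · rintro ⟨_, a, rfl, _, rfl⟩
    exact hp.hom.2.1 a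
  · intro h
    obtain ⟨a, ha, rfl⟩ := hp.rng_lift w w.2 l h.symm
    exact ⟨_, a, rfl, rfl, Subtype.ext ha⟩

theorem mem_lift_comp (hp : IsCovering Ω Λ p) {f g : A} (h : Λ.src f = Λ.rng g)
    {u w : Ω.Vertex} :
    w ∈ hp.lift (Λ.comp f g) u ↔ ∃ z, z ∈ hp.lift g u ∧ w ∈ hp.lift f z := by
  simp only [mem_lift]
  constructor
  · rintro ⟨a, ha, rfl, rfl⟩
    obtain ⟨b, hba, hb⟩ := hp.src_lift (Ω.src a) (Ω.src_src a) g
      (by rw [hp.hom.1, ha, Λ.src_comp _ _ h])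
    obtain ⟨c, hcb, hc⟩ := hp.src_lift (Ω.rng b) (Ω.src_rng b) f (by rw [hp.hom.2.1, hb, h])
    have hcomp : Ω.comp c b = a := hp.src_inj _ _ (by rw [Ω.src_comp _ _ hcb, hba])
      (by rw [hp.hom.2.2.1 _ _ hcb, hc, hb, ha])
    exact ⟨Ω.range b, ⟨b, hb, Subtype.ext hba, rfl⟩, c, hc, Subtype.ext hcb,
      Subtype.ext (hcomp ▸ (Ω.rng_comp _ _ hcb).symm)⟩
  · rintro ⟨_, ⟨b, rfl, rfl, rfl⟩, c, rfl, hcb, rfl⟩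
    have hcb : Ω.src c = Ω.rng b := congrArg Subtype.val hcb
    exact ⟨Ω.comp c b, hp.hom.2.2.1 _ _ hcb, Subtype.ext (Ω.src_comp _ _ hcb),
      Subtype.ext (Ω.rng_comp _ _ hcb)⟩

theorem isFunctorToGpdFun_lift (hp : IsCovering Ω Λ p) :
    IsFunctorToGpdFun Λ (partialBijections Ω.Vertex) hp.lift := by
  refine ⟨fun l => ?_, fun l => ?_, fun f g h => ?_⟩ <;> ext u w <;> simp only [← Option.mem_def]
  · rw [hp.mem_lift_of_isVertex (Λ.src_src l), mem_partialBijections_src, hp.isSome_lift_iff]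
  · rw [hp.mem_lift_of_isVertex (Λ.src_rng l), mem_partialBijections_rng, hp.isSome_lift_symm_iff]
  · rw [hp.mem_lift_comp h, mem_partialBijections_comp]

/-- The extension of `hp.lift` to the fundamental groupoid of `Λ`. -/
noncomputable def monodromy (hp : IsCovering Ω Λ p) (F : FundamentalGroupoid Λ) :
    F.B → Ω.Vertex ≃. Ω.Vertex :=
  (F.univ _ _ hp.isFunctorToGpdFun_lift).choose

variable {F : FundamentalGroupoid Λ}

theorem isGpdHomFun_monodromy (hp : IsCovering Ω Λ p) :
    IsGpdHomFun F.G (partialBijections Ω.Vertex) (hp.monodromy F) :=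
  (F.univ _ _ hp.isFunctorToGpdFun_lift).choose_spec.1.1

theorem monodromy_i (hp : IsCovering Ω Λ p) (l : A) : hp.monodromy F (F.i l) = hp.lift l :=
  (F.univ _ _ hp.isFunctorToGpdFun_lift).choose_spec.1.2 l

theorem isActionFunctor_monodromy (hp : IsCovering Ω Λ p) :
    IsActionFunctor F.G (hp.monodromy F) fun u => F.i (p u) where
  hom := hp.isGpdHomFun_monodromy
  fib_vertex u := F.isVertex_i (hp.hom.map_isVertex u.2)
  mem_iff b hb u w := by
    obtain ⟨x, rfl⟩ := F.exists_i_eq hb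
    rw [hp.monodromy_i, hp.mem_lift_of_isVertex x.2, F.i_inj (hp.hom.map_isVertex u.2) x.2]

/-- The action of `𝒢(Λ)` on `Ω⁰` determined by `i(p(a)) ⬝ s(a) = r(a)`. -/
noncomputable def action (hp : IsCovering Ω Λ p) (F : FundamentalGroupoid Λ) :
    GpdActionStruct F.G Ω.Vertex :=
  .ofFunctor hp.isActionFunctor_monodromy

theorem fib_action_eq_iff (hp : IsCovering Ω Λ p) (hq : IsCovering Ω' Λ q) {u : Ω.Vertex}
    {w : Ω'.Vertex} : (hq.action F).fib w = (hp.action F).fib u ↔ q w = p u :=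
  F.i_inj (hq.hom.map_isVertex w.2) (hp.hom.map_isVertex u.2)

theorem action_act_i (hp : IsCovering Ω Λ p) (a : A') :
    (hp.action F).act (F.i (p a)) (Ω.source a) = Ω.range a :=
  GpdActionStruct.ofFunctor_act_of_mem _
    ((hp.monodromy_i _).symm ▸ hp.mem_lift.2 ⟨a, rfl, rfl, rfl⟩)

theorem src_i_map (hp : IsCovering Ω Λ p) (a : A') :
    F.G.src (F.i (p a)) = (hp.action F).fib (Ω.source a) :=
  ((congrArg F.i (hp.hom.1 a)).trans (F.i_hom.1 _)).symm

theorem action_transitive (hp : IsCovering Ω Λ p) (hΩ : Ω.Connected) :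
    (hp.action F).Transitive := by
  have horbit := (hp.action F).equivalence_orbit
  intro u w
  rw [← Ω.source_coe u, ← Ω.source_coe w]
  refine hΩ.rel_of_equivalence (horbit.comap Ω.source) (fun a => ?_) w.2 u.2
  have hsrc : Ω.source (Ω.src a) = Ω.source a := Ω.source_coe (Ω.source a)
  have hrng : Ω.source (Ω.rng a) = Ω.range a := Ω.source_coe (Ω.range a)
  rw [Function.onFun, hsrc, hrng]
  exact horbit.symm ⟨F.i (p a), hp.src_i_map a, hp.action_act_i a⟩

end IsCovering

namespace IsCovering

section Stabilizer

variable {k : ℕ} {A A' : Type} {Λ : KGraphStruct k A} {Ω : KGraphStruct k A'}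
  {p : A' → A} {F : FundamentalGroupoid Λ} {FΩ : FundamentalGroupoid Ω} {pst : FΩ.B → F.B}

theorem i_action_act (hp : IsCovering Ω Λ p) (hpst : IsGpdHomFun FΩ.G F.G pst)
    (hpsti : ∀ a, pst (FΩ.i a) = F.i (p a)) {b : FΩ.B} {u : Ω.Vertex}
    (hb : FΩ.G.src b = FΩ.i u) : FΩ.i ((hp.action F).act (pst b) u) = FΩ.G.rng b := by
  have hfib {c : FΩ.B} {z : Ω.Vertex} (hc : FΩ.G.src c = FΩ.i z) :
      F.G.src (pst c) = (hp.action F).fib z := by rw [← hpst.1, hc, hpsti]; rfl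
  induction b using FΩ.induction generalizing u with
  | of a =>
    obtain rfl : Ω.source a = u := Subtype.ext
      ((FΩ.i_inj (Ω.src_src a) u.2).1 ((FΩ.i_hom.1 a).trans hb))
    rw [hpsti, hp.action_act_i]
    exact FΩ.i_hom.2.1 a
  | comp f g hfg hf hg =>
    rw [FΩ.G.src_comp _ _ hfg] at hb
    rw [hpst.2.2 _ _ hfg, (hp.action F).act_comp _ _ _ (hfib hb) (by rw [← hpst.1, hfg, hpst.2.1]),
      hf (hfg.trans (hg hb).symm), FΩ.G.rng_comp _ _ hfg]
  | inv f hf =>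
    obtain ⟨w, hw⟩ := FΩ.exists_i_eq (FΩ.G.src_src f)
    have hact : (hp.action F).act (pst f) w = u := Subtype.ext
      ((FΩ.i_inj (Subtype.prop _) u.2).1 (by rw [hf hw.symm, ← hb, FΩ.G.src_inv]))
    rw [hpst.map_inv, ← hact, GpdActionStruct.act_inv_act (hfib hw.symm), hw, FΩ.G.rng_inv]

theorem exists_groupoid_lift (hp : IsCovering Ω Λ p) (hpst : IsGpdHomFun FΩ.G F.G pst)
    (hpsti : ∀ a, pst (FΩ.i a) = F.i (p a)) {g : F.B} {u : Ω.Vertex}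
    (hg : F.G.src g = (hp.action F).fib u) : ∃ b, FΩ.G.src b = FΩ.i u ∧ pst b = g := by
  induction g using F.induction generalizing u with
  | of l =>
    obtain ⟨a, ha, rfl⟩ := hp.src_lift u u.2 l
      ((F.i_inj (Λ.src_src l) (hp.hom.map_isVertex u.2)).1 ((F.i_hom.1 l).trans hg))
    exact ⟨FΩ.i a, by rw [← FΩ.i_hom.1, ha], hpsti a⟩
  | comp f g hfg hf ih =>
    rw [F.G.src_comp _ _ hfg] at hg
    obtain ⟨b, hb, rfl⟩ := ih hg
    obtain ⟨c, hc, rfl⟩ := hf (hfg.trans ((hp.action F).act_fib _ _ hg).symm)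
    have hcb : FΩ.G.src c = FΩ.G.rng b := hc.trans (hp.i_action_act hpst hpsti hb)
    exact ⟨FΩ.G.comp c b, by rw [FΩ.G.src_comp _ _ hcb, hb], hpst.2.2 _ _ hcb⟩
  | inv f hf =>
    rw [F.G.src_inv] at hg
    obtain ⟨b, hb, rfl⟩ := hf (GpdActionStruct.fib_act_inv hg).symm
    have hrng := hp.i_action_act hpst hpsti hb
    rw [GpdActionStruct.act_act_inv hg] at hrng
    exact ⟨FΩ.G.inv b, by rw [FΩ.G.src_inv, hrng], hpst.map_inv b⟩

theorem stab_action (hp : IsCovering Ω Λ p) (hpst : IsGpdHomFun FΩ.G F.G pst)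
    (hpsti : ∀ a, pst (FΩ.i a) = F.i (p a)) (v : Ω.Vertex) :
    (hp.action F).stab v = pst '' FΩ.pi1 v := by
  have hfib : (hp.action F).fib v = pst (FΩ.i v) := (hpsti v).symm
  ext g
  constructor
  · rintro ⟨hsrc, -, hact⟩
    obtain ⟨b, hb, rfl⟩ := hp.exists_groupoid_lift hpst hpsti hsrc
    exact ⟨b, ⟨hb, by rw [← hp.i_action_act hpst hpsti hb, hact]⟩, rfl⟩
  · rintro ⟨b, ⟨hsrc, hrng⟩, rfl⟩
    exact ⟨by rw [hfib, ← hpst.1, hsrc], by rw [hfib, ← hpst.2.1, hrng], Subtype.ext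
      ((FΩ.i_inj (Subtype.prop _) v.2).1 ((hp.i_action_act hpst hpsti hsrc).trans hrng))⟩

end Stabilizer

section Automorphisms

variable {k : ℕ} {A A' A'' : Type} {Λ : KGraphStruct k A} {Ω : KGraphStruct k A'}
  {Ω' : KGraphStruct k A''} {p : A' → A} {q : A'' → A} {φ : A' → A''}

theorem isKGraphHomFun_of_map_eq (hp : IsKGraphHomFun Ω Λ p) (hq : IsCovering Ω' Λ q)
    (hsrc : ∀ a, φ (Ω.src a) = Ω'.src (φ a)) (hrng : ∀ a, φ (Ω.rng a) = Ω'.rng (φ a))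
    (hφ : ∀ a, q (φ a) = p a) : IsKGraphHomFun Ω Ω' φ := by
  refine ⟨hsrc, hrng, fun a b h => ?_, fun a => ?_⟩
  · have hab : Ω'.src (φ a) = Ω'.rng (φ b) := by rw [← hsrc, h, hrng]
    apply hq.src_inj
    · rw [← hsrc, Ω.src_comp _ _ h, Ω'.src_comp _ _ hab, hsrc]
    · rw [hφ, hp.2.2.1 _ _ h, hq.hom.2.2.1 _ _ hab, hφ, hφ]
  · rw [← hq.hom.2.2.2, hφ, hp.2.2.2]

theorem isActionHom_onVertices {F : FundamentalGroupoid Λ} (hp : IsCovering Ω Λ p)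
    (hq : IsCovering Ω' Λ q) (hφ : IsKGraphHomFun Ω Ω' φ) (hφq : ∀ a, q (φ a) = p a) :
    IsActionHom (hp.action F) (hq.action F) hφ.onVertices := by
  refine F.isActionHom_of_act_i (fun v => congrArg F.i (hφq v)) fun l v h => ?_
  obtain ⟨a, ha, rfl⟩ := hp.src_lift v v.2 l
    ((F.i_inj (Λ.src_src l) (hp.hom.map_isVertex v.2)).1 ((F.i_hom.1 l).trans h))
  obtain rfl : Ω.source a = v := Subtype.ext ha
  have hsrc : hφ.onVertices (Ω.source a) = Ω'.source (φ a) := Subtype.ext (hφ.1 a)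
  rw [hp.action_act_i, hsrc, ← hφq, hq.action_act_i]
  exact Subtype.ext (hφ.2.1 a)

theorem exists_kGraphHom_of_isActionHom {F : FundamentalGroupoid Λ} (hp : IsCovering Ω Λ p)
    (hq : IsCovering Ω' Λ q) {ψ : Ω.Vertex → Ω'.Vertex}
    (hψ : IsActionHom (hp.action F) (hq.action F) ψ) :
    ∃ (φ : A' → A'') (hφ : IsKGraphHomFun Ω Ω' φ), (∀ a, q (φ a) = p a) ∧ hφ.onVertices = ψ := by
  have hlift (a : A') : ∃ b, Ω'.src b = ψ (Ω.source a) ∧ q b = p a :=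
    hq.src_lift _ (ψ (Ω.source a)).2 _
      ((hp.hom.1 a).symm.trans ((fib_action_eq_iff hp hq).1 (hψ.1 (Ω.source a))).symm)
  choose φ hφsrc hφq using hlift
  have hφrng (a : A') : Ω'.range (φ a) = ψ (Ω.range a) := by
    have hsrc : Ω'.source (φ a) = ψ (Ω.source a) := Subtype.ext (hφsrc a)
    rw [← hq.action_act_i, hφq, hsrc, ← hψ.2 _ _ (hp.src_i_map a), hp.action_act_i]
  have hφv (v : Ω.Vertex) : φ v = ψ v := by
    have hvert : Ω'.IsVertex (φ v) :=
      hq.isVertex_map_iff.1 ((hφq v).symm ▸ hp.hom.map_isVertex v.2)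
    rw [← hvert, hφsrc, Ω.source_coe]
  have hφ : IsKGraphHomFun Ω Ω' φ := isKGraphHomFun_of_map_eq hp.hom hq
    (fun a => (hφv (Ω.source a)).trans (hφsrc a).symm)
    (fun a => (hφv (Ω.range a)).trans (congrArg Subtype.val (hφrng a)).symm) hφq
  exact ⟨φ, hφ, hφq, funext fun v => Subtype.ext (hφv v)⟩

theorem bijective_onVertices_iff (hp : IsCovering Ω Λ p) (hq : IsCovering Ω' Λ q)
    (hφ : IsKGraphHomFun Ω Ω' φ) (hφq : ∀ a, q (φ a) = p a) :
    Function.Bijective hφ.onVertices ↔ Function.Bijective φ := by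
  constructor
  · refine fun h => ⟨fun a b hab => hp.src_inj a b ?_ (by rw [← hφq, hab, hφq]), fun c => ?_⟩
    · exact congrArg Subtype.val (h.1 (a₁ := Ω.source a) (a₂ := Ω.source b)
        (Subtype.ext ((hφ.1 a).trans ((congrArg Ω'.src hab).trans (hφ.1 b).symm))))
    · obtain ⟨v, hv⟩ := h.2 (Ω'.source c)
      have hv : φ v = Ω'.src c := congrArg Subtype.val hv
      obtain ⟨a, hav, ha⟩ := hp.src_lift v v.2 (q c) (by rw [← hq.hom.1, ← hv, hφq])
      exact ⟨a, hq.src_inj _ _ (by rw [← hφ.1, hav, hv]) (by rw [hφq, ha])⟩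
  · refine fun h => ⟨fun u w huw => Subtype.ext (h.1 (congrArg Subtype.val huw)), fun w => ?_⟩
    obtain ⟨a, ha⟩ := h.2 w
    exact ⟨Ω.source a, Subtype.ext ((hφ.1 a).trans (ha ▸ w.2))⟩

theorem exists_isActionAut_iff {F : FundamentalGroupoid Λ} (hp : IsCovering Ω Λ p)
    (u w : Ω.Vertex) : (∃ ψ, IsActionAut (hp.action F) ψ ∧ ψ u = w) ↔
      ∃ φ, IsCoveringAut Ω Λ p φ ∧ φ u = w := by
  constructor
  · rintro ⟨ψ, ⟨hbij, hψ⟩, rfl⟩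
    obtain ⟨φ, hφ, hφp, rfl⟩ := exists_kGraphHom_of_isActionHom hp hp hψ
    exact ⟨φ, ⟨(bijective_onVertices_iff hp hp hφ hφp).1 hbij, hφ, hφp⟩, rfl⟩
  · rintro ⟨φ, ⟨hbij, hφ, hφp⟩, huw⟩
    exact ⟨hφ.onVertices, ⟨(bijective_onVertices_iff hp hp hφ hφp).2 hbij,
      isActionHom_onVertices hp hp hφ hφp⟩, Subtype.ext huw⟩

end Automorphisms

end IsCovering

/-! ### Transitivity on fibers and the quotient covering -/

/-- `Aut(Ω,p)` is transitive on the fiber `p⁻¹(l)` of a morphism `l`, not necessarily a vertex. -/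
def AutTransitiveOn {k : ℕ} {A A' : Type} (Ω : KGraphStruct k A') (Λ : KGraphStruct k A)
    (p : A' → A) (l : A) : Prop :=
  ∀ a b, p a = l → p b = l → ∃ φ, IsCoveringAut Ω Λ p φ ∧ φ a = b

section AutTransitive

variable {k : ℕ} {A A' : Type} {Λ : KGraphStruct k A} {Ω : KGraphStruct k A'} {p : A' → A}

theorem autTransitiveOn_iff_of_isVertex (hp : IsCovering Ω Λ p) {x : A} (hx : Λ.IsVertex x) :
    AutTransitiveOn Ω Λ p x ↔ ∀ u w, Ω.IsVertex u → Ω.IsVertex w → p u = x → p w = x →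
      ∃ φ, IsCoveringAut Ω Λ p φ ∧ φ u = w :=
  ⟨fun h u w _ _ => h u w, fun h u w hu hw =>
    h u w (hp.isVertex_map_iff.1 (hu ▸ hx)) (hp.isVertex_map_iff.1 (hw ▸ hx)) hu hw⟩

theorem isNormalAt_iff_autTransitiveOn (hp : IsCovering Ω Λ p) (hΩ : Ω.Connected)
    {F : FundamentalGroupoid Λ} {FΩ : FundamentalGroupoid Ω} {pst : FΩ.B → F.B}
    (hpst : IsGpdHomFun FΩ.G F.G pst) (hpsti : ∀ a, pst (FΩ.i a) = F.i (p a)) (v : Ω.Vertex) :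
    F.G.IsNormalAt (F.i (p v)) (pst '' FΩ.pi1 v) ↔ AutTransitiveOn Ω Λ p (p v) := by
  have hnormal := GpdActionStruct.isNormalAt_stab_iff (hp.action_transitive (F := F) hΩ) v
  simp only [hp.stab_action hpst hpsti, IsCovering.fib_action_eq_iff hp hp,
    hp.exists_isActionAut_iff] at hnormal
  rw [autTransitiveOn_iff_of_isVertex hp (hp.hom.map_isVertex v.2)]
  exact hnormal.trans ⟨fun h u w hu hw => h ⟨u, hu⟩ ⟨w, hw⟩, fun h u w => h u w u.2 w.2⟩

theorem autTransitiveOn_src_iff (hp : IsCovering Ω Λ p) (l : A) :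
    AutTransitiveOn Ω Λ p (Λ.src l) ↔ AutTransitiveOn Ω Λ p l := by
  constructor
  · rintro h a b rfl hb
    obtain ⟨φ, hφ, hab⟩ := h (Ω.src a) (Ω.src b) (hp.hom.1 a) (by rw [hp.hom.1, hb])
    exact ⟨φ, hφ, hp.src_inj _ _ (by rw [← hφ.2.1.1, hab]) (by rw [hφ.2.2, hb])⟩
  · rw [autTransitiveOn_iff_of_isVertex hp (Λ.src_src l)]
    intro h u w hu hw hul hwl
    obtain ⟨a, rfl, ha⟩ := hp.src_lift u hu l hul.symm
    obtain ⟨b, rfl, hb⟩ := hp.src_lift w hw l hwl.symm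
    obtain ⟨φ, hφ, rfl⟩ := h a b ha hb
    exact ⟨φ, hφ, hφ.2.1.1 a⟩

theorem autTransitiveOn_rng_iff (hp : IsCovering Ω Λ p) (l : A) :
    AutTransitiveOn Ω Λ p (Λ.rng l) ↔ AutTransitiveOn Ω Λ p l := by
  constructor
  · rintro h a b rfl hb
    obtain ⟨φ, hφ, hab⟩ := h (Ω.rng a) (Ω.rng b) (hp.hom.2.1 a) (by rw [hp.hom.2.1, hb])
    exact ⟨φ, hφ, hp.rng_inj _ _ (by rw [← hφ.2.1.2.1, hab]) (by rw [hφ.2.2, hb])⟩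
  · rw [autTransitiveOn_iff_of_isVertex hp (Λ.src_rng l)]
    intro h u w hu hw hul hwl
    obtain ⟨a, rfl, ha⟩ := hp.rng_lift u hu l hul.symm
    obtain ⟨b, rfl, hb⟩ := hp.rng_lift w hw l hwl.symm
    obtain ⟨φ, hφ, rfl⟩ := h a b ha hb
    exact ⟨φ, hφ, hφ.2.1.2.1 a⟩

theorem autTransitiveOn_iff_forall (hp : IsCovering Ω Λ p) (hΩ : Ω.Connected) (v : Ω.Vertex) :
    AutTransitiveOn Ω Λ p (p v) ↔
      ∀ a b, p a = p b → ∃ φ, IsCoveringAut Ω Λ p φ ∧ φ a = b := by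
  have hiff (a : A') : AutTransitiveOn Ω Λ p (p v) ↔ AutTransitiveOn Ω Λ p (p a) := by
    rw [← autTransitiveOn_src_iff hp (p a), ← hp.hom.1]
    refine hΩ.rel_of_equivalence (r := fun a b => AutTransitiveOn Ω Λ p (p a) ↔
      AutTransitiveOn Ω Λ p (p b)) ⟨fun _ => .rfl, .symm, .trans⟩ (fun b => ?_) v.2 (Ω.src_src a)
    rw [hp.hom.1, hp.hom.2.1, autTransitiveOn_src_iff hp, autTransitiveOn_rng_iff hp]
  exact ⟨fun h a b hab => (hiff a).1 h a b rfl hab.symm,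
    fun h a b ha hb => h a b (ha.trans hb.symm)⟩

end AutTransitive

theorem bijective_iff_factorsThrough {X Y Z : Type*} {f : X → Y} {g : X → Z} {e : Z → Y}
    (hf : Function.Surjective f) (hg : Function.Surjective g) (he : ∀ a, e (g a) = f a) :
    Function.Bijective e ↔ g.FactorsThrough f := by
  obtain rfl : e ∘ g = f := funext he
  refine ⟨fun h a b hab => h.1 hab, fun h => ⟨fun y z hyz => ?_, hf.of_comp⟩⟩
  obtain ⟨a, rfl⟩ := hg y
  obtain ⟨b, rfl⟩ := hg z
  exact h hyz

theorem IsKGraphHomFun.symm_of_inverse {k : ℕ} {A A' : Type} {S : KGraphStruct k A}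
    {T : KGraphStruct k A'} {f : A → A'} {g : A' → A} (hf : IsKGraphHomFun S T f)
    (hgf : Function.LeftInverse g f) (hfg : Function.RightInverse g f) :
    IsKGraphHomFun T S g := by
  have hsrc (a : A') : g (T.src a) = S.src (g a) := hgf.injective (by rw [hfg, hf.1, hfg])
  have hrng (a : A') : g (T.rng a) = S.rng (g a) := hgf.injective (by rw [hfg, hf.2.1, hfg])
  refine ⟨hsrc, hrng, fun a b h => hgf.injective ?_, fun a => by rw [← hf.2.2.2, hfg]⟩
  rw [hfg, hf.2.2.1 _ _ (by rw [← hsrc, h, hrng]), hfg, hfg]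

theorem bijective_iff_exists_iso {k : ℕ} {A A' Qc : Type} {Λ : KGraphStruct k A}
    {Q : KGraphStruct k Qc} {p : A' → A} {π : A' → Qc} {qbar : Qc → A}
    (hp : Function.Surjective p) (hπ : Function.Surjective π) (hqbar : IsKGraphHomFun Q Λ qbar)
    (hcomm : ∀ a, qbar (π a) = p a) :
    Function.Bijective qbar ↔
      ∃ ψ : A → Qc, Function.Bijective ψ ∧ IsKGraphHomFun Λ Q ψ ∧ ∀ a, ψ (p a) = π a := by
  constructor
  · intro h
    obtain ⟨ψ, hl, hr⟩ := Function.bijective_iff_has_inverse.1 h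
    exact ⟨ψ, ⟨hr.injective, hl.surjective⟩, hqbar.symm_of_inverse hl hr,
      fun a => by rw [← hcomm, hl]⟩
  · rintro ⟨ψ, -, -, hψ⟩
    rw [bijective_iff_factorsThrough hp hπ hcomm]
    intro a b hab
    rw [← hψ, hab, hψ]

/-- For a connected covering `p : Ω → Λ`, `x ∈ Λ⁰` and
`v ∈ p⁻¹(x)`, the following are equivalent: (i) `p₊π(Ω,v)` is normal in
`π(Λ,x)`; (ii) `Aut(Ω,p)` acts transitively on `p⁻¹(x)`; (iii) the induced
covering `Ω/Aut(Ω,p) → Λ` is an isomorphism; (iv) `(Ω,p)` is isomorphic to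
the quotient covering `Ω → Ω/Aut(Ω,p)`.  The quotient `Ω/Aut(Ω,p)` is given
abstractly as a `k`-graph `Q` together with a surjective `k`-graph morphism
`π` whose fibers are exactly the `Aut(Ω,p)`-orbits, and `qbar : Q → Λ` is the
induced map with `qbar ∘ π = p`. -/
theorem covering_normal_tfae {k : ℕ} {A A' Qc : Type}
    (Λ : KGraphStruct k A) (Ω : KGraphStruct k A') (Q : KGraphStruct k Qc)
    (FΛ : FundamentalGroupoid Λ) (FΩ : FundamentalGroupoid Ω)
    (p : A' → A) (hp : IsCovering Ω Λ p) (hconn : Ω.Connected)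
    (pst : FΩ.B → FΛ.B) (hpst : IsGpdHomFun FΩ.G FΛ.G pst)
    (hpsti : ∀ a, pst (FΩ.i a) = FΛ.i (p a))
    (x : A) (hx : Λ.IsVertex x) (v : A') (hv : Ω.IsVertex v) (hpv : p v = x)
    (π : A' → Qc) (hπ : IsKGraphHomFun Ω Q π) (hπs : Function.Surjective π)
    (hπfib : ∀ a b, π a = π b ↔ ∃ φ, IsCoveringAut Ω Λ p φ ∧ φ a = b)
    (qbar : Qc → A) (hqbar : IsKGraphHomFun Q Λ qbar)
    (hqcomm : ∀ a, qbar (π a) = p a) :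
    (FΛ.G.IsNormalAt (FΛ.i x) (pst '' FΩ.pi1 v) ↔
      (∀ u w, Ω.IsVertex u → Ω.IsVertex w → p u = x → p w = x →
        ∃ φ, IsCoveringAut Ω Λ p φ ∧ φ u = w)) ∧
    ((∀ u w, Ω.IsVertex u → Ω.IsVertex w → p u = x → p w = x →
        ∃ φ, IsCoveringAut Ω Λ p φ ∧ φ u = w) ↔
      Function.Bijective qbar) ∧
    (Function.Bijective qbar ↔
      ∃ ψ : A → Qc, Function.Bijective ψ ∧ IsKGraphHomFun Λ Q ψ ∧
        ∀ a, ψ (p a) = π a) := by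
  subst hpv
  have hnormal := isNormalAt_iff_autTransitiveOn hp hconn hpst hpsti ⟨v, hv⟩
  have htrans := autTransitiveOn_iff_of_isVertex hp hx
  refine ⟨hnormal.trans htrans, ?_, bijective_iff_exists_iso hp.surj hπs hqbar hqcomm⟩
  rw [← htrans, autTransitiveOn_iff_forall hp hconn ⟨v, hv⟩,
    bijective_iff_factorsThrough hp.surj hπs hqcomm]
  simp only [Function.FactorsThrough, hπfib]

end KGraphCovering
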